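/- arXiv:2304.05831 — 2 statements merged into one kernel-verified Lean document; each statement's English description precedes it below -/
import Mathlib

section
/- If G is a finite connected simple graph that is not a sputnik graph, then G has a minimal dominating set D and an edge e of G such that G − e is connected but D is not a minimal dominating set of G − e (i.e., D is not 1-robust). -/
/-!
Let `v` lie on a cycle and have no neighbor of degree 1.

The tool is `exists_of_private`: if a dominating set `S` misses a vertex `w`, and `u` is the only
neighbor of `w` in `S`, then every minimal dominating set `D ⊆ S` must contain `u`, and deleting
the edge `uw` leaves `w` undominated by `D`. So it suffices to find such `S`, `u`, `w` with `uw`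
not a bridge. There are two cases.

* Some neighbor `x` of `v` has all its neighbors in the closed neighborhood of `v`. Then the
  complement of the open neighborhood of `v` is dominating, and `v` is the only neighbor of `x`
  in it. As `x` does not have degree 1, it has a neighbor `y ≠ v`, so `vx` lies on the triangle
  `v, x, y` and is not a bridge.
* Every neighbor of `v` has a neighbor outside the closed neighborhood of `v`. Let `u` be the
  successor of `v` on a cycle. The vertices outside the closed neighborhood of `v`, together
  with `u`, form a dominating set in which `u` is the only neighbor of `v`.
-/

/-- A dominating set: every vertex is in `D` or has a neighbor in `D`. -/
def Dominating {V : Type*} (G : SimpleGraph V) (D : Set V) : Prop :=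
  ∀ v : V, v ∈ D ∨ ∃ u ∈ D, G.Adj u v

/-- A minimal dominating set: dominating, and no proper subset is dominating. -/
def MinDominating {V : Type*} (G : SimpleGraph V) (D : Set V) : Prop :=
  Dominating G D ∧ ∀ D' : Set V, D' ⊂ D → ¬Dominating G D'

/-- `D` is `k`-robust: after deleting any set `F` of at most `k` edges of `G`
that keeps the graph connected, `D` is still a minimal dominating set. -/
def RobustMDS {V : Type*} (G : SimpleGraph V) (k : ℕ) (D : Set V) : Prop :=
  ∀ F : Finset (Sym2 V), ↑F ⊆ G.edgeSet → F.card ≤ k →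
    (G.deleteEdges ↑F).Connected → MinDominating (G.deleteEdges ↑F) D

/-- A sputnik graph: every vertex on a cycle has a neighbor of degree 1
(a neighbor whose only neighbor is that vertex). -/
def Sputnik {V : Type*} (G : SimpleGraph V) : Prop :=
  ∀ v : V, (∃ c : G.Walk v v, c.IsCycle) →
    ∃ w : V, G.Adj v w ∧ G.neighborSet w = {v}

lemma Dominating.exists_minDominating_subset {V : Type*} [Finite V] {G : SimpleGraph V}
    {S : Set V} (hS : Dominating G S) : ∃ D ⊆ S, MinDominating G D := by
  obtain ⟨D, hDS, hD⟩ := exists_minimal_le_of_wellFoundedLT (Dominating G) S hS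
  exact ⟨D, hDS, hD.prop, fun D' hlt => hD.not_prop_of_lt hlt⟩

/-- A non-bridge `uw` such that `u` is the only vertex dominating `w` in some dominating set `S`
yields a minimal dominating set `D ⊆ S` that fails to dominate `w` once `uw` is deleted. -/
lemma exists_of_private {V : Type*} [Finite V] {G : SimpleGraph V} (hG : G.Connected)
    {S : Set V} (hS : Dominating G S) {u w : V} (huw : G.Adj u w) (hw : w ∉ S)
    (huniq : ∀ s ∈ S, G.Adj s w → s = u) (hbr : ¬G.IsBridge s(u, w)) :
    ∃ (D : Set V) (e : Sym2 V), MinDominating G D ∧ e ∈ G.edgeSet ∧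
      (G.deleteEdges {e}).Connected ∧ ¬MinDominating (G.deleteEdges {e}) D := by
  obtain ⟨D, hDS, hD⟩ := hS.exists_minDominating_subset
  refine ⟨D, s(u, w), hD, huw, hG.connected_delete_edge_of_not_isBridge hbr, fun h => ?_⟩
  obtain hwD | ⟨s, hsD, hs⟩ := h.1 w
  · exact hw (hDS hwD)
  · rw [SimpleGraph.deleteEdges_adj] at hs
    obtain rfl := huniq s (hDS hsD) hs.1
    exact hs.2 rfl

lemma not_isBridge_of_triangle {V : Type*} {G : SimpleGraph V} {v x y : V}
    (hvx : G.Adj v x) (hvy : G.Adj v y) (hyx : G.Adj y x) : ¬G.IsBridge s(v, x) := by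
  rw [SimpleGraph.isBridge_iff, not_not]
  have h₁ : (G.deleteEdges {s(v, x)}).Adj v y := by
    simp [SimpleGraph.deleteEdges_adj, hvy, hyx.ne, hvx.ne]
  have h₂ : (G.deleteEdges {s(v, x)}).Adj y x := by
    simp [SimpleGraph.deleteEdges_adj, hyx, hvx.ne', hvy.ne']
  exact h₁.reachable.trans h₂.reachable

/-- If a finite connected graph is not a sputnik graph, then it has a minimal
dominating set that is not 1-robust: some edge can be removed keeping the
graph connected while destroying minimal domination. -/
theorem non_sputnik_has_non_robust_MDS {V : Type*} [Fintype V]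
    (G : SimpleGraph V) (hG : G.Connected) (h : ¬Sputnik G) :
    ∃ (D : Set V) (e : Sym2 V), MinDominating G D ∧ e ∈ G.edgeSet ∧
      (G.deleteEdges {e}).Connected ∧ ¬MinDominating (G.deleteEdges {e}) D := by
  simp only [Sputnik, not_forall, not_exists, not_and] at h
  obtain ⟨v, ⟨c, hc⟩, hleaf⟩ := h
  by_cases hx : ∃ x, G.Adj v x ∧ ∀ y, G.Adj x y → y = v ∨ G.Adj v y
  · obtain ⟨x, hvx, hx⟩ := hx
    obtain ⟨y, hxy, hyv⟩ : ∃ y, G.Adj x y ∧ y ≠ v := by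
      by_contra! hcon
      refine hleaf x hvx (Set.ext fun y => ⟨hcon y, ?_⟩)
      rintro rfl
      exact hvx.symm
    have hvy : G.Adj v y := (hx y hxy).resolve_left hyv
    refine exists_of_private (S := {z | ¬G.Adj v z}) hG (fun z => ?_) hvx (not_not.2 hvx)
      (fun s hs hsx => (hx s hsx.symm).resolve_right hs)
      (not_isBridge_of_triangle hvx hvy hxy.symm)
    by_cases hz : G.Adj v z
    · exact .inr ⟨v, G.irrefl, hz⟩
    · exact .inl hz
  · push Not at hx
    have hvu : G.Adj v c.snd := c.adj_snd hc.not_nil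
    refine exists_of_private (S := {z | z = c.snd ∨ z ≠ v ∧ ¬G.Adj v z}) (u := c.snd) (w := v) hG
      (fun z => ?_) hvu.symm (fun hv => hv.elim hvu.ne fun hv => hv.1 rfl)
      (fun s hs hsv => hs.resolve_right fun hs => hs.2 hsv.symm) fun hbr => ?_
    · by_cases hzv : z = v
      · exact .inr ⟨c.snd, .inl rfl, hzv ▸ hvu.symm⟩
      by_cases hz : G.Adj v z
      · obtain ⟨y, hzy, hy⟩ := hx z hz
        exact .inr ⟨y, .inr hy, hzy.symm⟩
      · exact .inl (.inr ⟨hzv, hz⟩)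
    · exact hbr.notMem_edges_of_isCycle hc
        (Sym2.eq_swap ▸ SimpleGraph.Walk.mk_start_snd_mem_edges hc.not_nil)
end

section
/- Let G be a finite connected simple graph in which every maximal matching is 1-robust. Then in every maximal matching of G, every vertex of G that belongs to some cycle of G is an endpoint of a matched edge. -/
/-!
Call non-bridge an edge whose deletion leaves `G` connected. Deleting a non-bridge edge `xy`
of a maximal matching leaves `x` and `y` unmatched, so 1-robustness forces every neighbour of
`x` and `y` to be matched (`matched_of_adj`).

Suppose `v` lies on a cycle `v, a, b, …` and is unmatched in `M`. Replace the edges of `M` meeting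
`{a, b}` by the non-bridge edge `ab`, and extend the resulting matching to a maximal one, `N`. As
`v` is adjacent to `a`, it is matched in `N`, say to `x`. By maximality of `M`, the vertex `x` is
matched in `M`; its partner is `a` or `b`, since otherwise its edge of `M` would survive in `N`. So
`xa` or `xb` is an edge of `M` lying on the cycle `v, a, x` or `v, a, b, x`. That edge is
non-bridge, and its endpoint `x` is adjacent to the unmatched vertex `v`, which is impossible.
-/

/-- A matching: a set of edges of `G` that pairwise share no endpoint. -/
def Matching {V : Type*} (G : SimpleGraph V) (M : Set (Sym2 V)) : Prop :=
  M ⊆ G.edgeSet ∧ ∀ e ∈ M, ∀ f ∈ M, e ≠ f → ∀ v : V, v ∈ e → v ∉ f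

/-- A maximal matching: no edge of `G` can be added while staying a matching. -/
def MaxMatching {V : Type*} (G : SimpleGraph V) (M : Set (Sym2 V)) : Prop :=
  Matching G M ∧ ∀ e ∈ G.edgeSet, e ∉ M → ¬Matching G (insert e M)

/-- `M` is `k`-robust: after deleting any set `F` of at most `k` edges of `G`
that keeps the graph connected, `M \ F` is a maximal matching of `G − F`. -/
def RobustMM {V : Type*} (G : SimpleGraph V) (k : ℕ) (M : Set (Sym2 V)) : Prop :=
  ∀ F : Finset (Sym2 V), ↑F ⊆ G.edgeSet → F.card ≤ k →
    (G.deleteEdges ↑F).Connected → MaxMatching (G.deleteEdges ↑F) (M \ ↑F)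

theorem MaxMatching.exists_mem_of_adj {V : Type*} {G : SimpleGraph V} {M : Set (Sym2 V)}
    (hM : MaxMatching G M) {v x : V} (hvx : G.Adj v x) (hv : ∀ e ∈ M, v ∉ e) :
    ∃ e ∈ M, x ∈ e := by
  by_contra! hx
  refine hM.2 s(v, x) hvx (fun hmem => hv _ hmem (by simp)) ⟨?_, ?_⟩
  · exact Set.insert_subset hvx hM.1.1
  · rintro e (rfl | he) f (rfl | hf) hne u hu hu'
    · exact hne rfl
    · rcases Sym2.mem_iff.1 hu with rfl | rfl
      · exact hv _ hf hu'
      · exact hx _ hf hu'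
    · rcases Sym2.mem_iff.1 hu' with rfl | rfl
      · exact hv _ he hu
      · exact hx _ he hu
    · exact hM.1.2 e he f hf hne u hu hu'

/-- In a finite graph every matching extends to a maximal one. -/
theorem Matching.exists_maxMatching {V : Type*} [Fintype V] {G : SimpleGraph V} {M : Set (Sym2 V)}
    (hM : Matching G M) : ∃ N, M ⊆ N ∧ MaxMatching G N := by
  obtain ⟨N, hMN, hN⟩ := (Set.toFinite {N | Matching G N}).exists_le_maximal hM
  refine ⟨N, hMN, hN.prop, fun e _ heN hins => heN ?_⟩
  exact hN.le_of_ge hins (Set.subset_insert e N) (Set.mem_insert e N)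

/-- Key consequence of 1-robustness: a neighbour of an endpoint of a matched non-bridge edge is
itself matched. -/
theorem matched_of_adj {V : Type*} {G : SimpleGraph V} (hG : G.Connected) {M : Set (Sym2 V)}
    (hM : MaxMatching G M) (hR : RobustMM G 1 M) {v x y : V} (hxy : s(x, y) ∈ M)
    (hbr : ¬G.IsBridge s(x, y)) (hvx : G.Adj v x) : ∃ e ∈ M, v ∈ e := by
  by_contra! hv
  have hR' := hR {s(x, y)} (by simpa using hM.1.1 hxy) (by simp)
    (by simpa using hG.connected_delete_edge_of_not_isBridge hbr)
  have hvy : v ≠ y := fun hvy => hv _ hxy (by simp [hvy])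
  have hadj : (G.deleteEdges ↑({s(x, y)} : Finset (Sym2 V))).Adj v x := by
    rw [SimpleGraph.deleteEdges_adj]
    refine ⟨hvx, ?_⟩
    have := hvx.ne
    simp [this, hvy]
  obtain ⟨e, ⟨heM, hne⟩, hxe⟩ := hR'.exists_mem_of_adj hadj (fun e he => hv e he.1)
  exact hM.1.2 e heM _ hxy (by simpa using hne) x hxe (by simp)

/-- In a finite connected graph where every maximal matching is 1-robust,
every vertex lying on a cycle is matched in every maximal matching. -/
theorem cycle_vertex_matched {V : Type*} [Fintype V]
    (G : SimpleGraph V) (hG : G.Connected)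
    (h : ∀ M : Set (Sym2 V), MaxMatching G M → RobustMM G 1 M)
    (M : Set (Sym2 V)) (hM : MaxMatching G M)
    (v : V) (hv : ∃ c : G.Walk v v, c.IsCycle) :
    ∃ e ∈ M, v ∈ e := by
  obtain ⟨a, b, hva, hab, hbv, hbr⟩ :
      ∃ a b, G.Adj v a ∧ G.Adj a b ∧ b ≠ v ∧ ¬G.IsBridge s(a, b) := by
    obtain ⟨c, hc⟩ := hv
    match c, hc with
    | .nil, hc => exact absurd rfl hc.ne_nil
    | .cons _ .nil, hc => exact absurd hc.three_le_length (by simp)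
    | .cons (v := a) hva (.cons (v := b) hab p), hc =>
      refine ⟨a, b, hva, hab, ?_, ?_⟩
      · rintro rfl
        -- Returning to `v` after two steps would use the first edge twice.
        have := hc.edges_nodup
        simp [Sym2.eq_swap] at this
      · intro hb
        exact (SimpleGraph.isBridge_iff_forall_cycle_notMem hab).1 hb _ hc (by simp)
  by_contra! hunm
  have hM₁ : Matching G (insert s(a, b) {e ∈ M | a ∉ e ∧ b ∉ e}) := by
    refine ⟨Set.insert_subset hab fun e he => hM.1.1 he.1, ?_⟩
    rintro e (rfl | he) f (rfl | hf) hne u hu hu'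
    · exact hne rfl
    · rcases Sym2.mem_iff.1 hu with rfl | rfl
      · exact hf.2.1 hu'
      · exact hf.2.2 hu'
    · rcases Sym2.mem_iff.1 hu' with rfl | rfl
      · exact he.2.1 hu
      · exact he.2.2 hu
    · exact hM.1.2 e he.1 f hf.1 hne u hu hu'
  obtain ⟨N, hsub, hN⟩ := hM₁.exists_maxMatching
  have habN : s(a, b) ∈ N := hsub (Set.mem_insert _ _)
  obtain ⟨e, heN, hve⟩ := matched_of_adj hG hN (h N hN) habN hbr hva
  obtain ⟨x, rfl⟩ := hve
  have hvx : G.Adj v x := hN.1.1 heN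
  have hne : s(v, x) ≠ s(a, b) := by
    intro heq
    have : v ∈ s(a, b) := heq ▸ Sym2.mem_mk_left v x
    rcases Sym2.mem_iff.1 this with hva' | hvb'
    · exact hva.ne hva'
    · exact hbv hvb'.symm
  have hxa : x ≠ a := by
    rintro rfl
    exact hN.1.2 _ heN _ habN hne x (by simp) (by simp)
  have hxb : x ≠ b := by
    rintro rfl
    exact hN.1.2 _ heN _ habN hne x (by simp) (by simp)
  obtain ⟨f, hfM, hxf⟩ := hM.exists_mem_of_adj hvx hunm
  have hfab : a ∈ f ∨ b ∈ f := by
    by_contra! hf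
    have hfN : f ∈ N := hsub (Set.mem_insert_of_mem _ ⟨hfM, hf⟩)
    refine hN.1.2 _ heN _ hfN ?_ x (by simp) hxf
    rintro rfl
    exact hunm _ hfM (by simp)
  have hav := hva.ne
  have hxv := hvx.ne
  have hab' := hab.ne
  rcases hfab with haf | hbf
  · obtain rfl : f = s(x, a) := (Sym2.mem_and_mem_iff hxa).1 ⟨hxf, haf⟩
    refine absurd (matched_of_adj hG hM (h M hM) hfM ?_ hvx) (by simpa using hunm)
    rw [SimpleGraph.isBridge_iff]
    refine fun hb => hb ?_
    have h1 : (G.deleteEdges {s(x, a)}).Adj x v := by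
      simp [SimpleGraph.deleteEdges_adj, hvx.symm, hav, hxv, hxa]
    have h2 : (G.deleteEdges {s(x, a)}).Adj v a := by
      simp [SimpleGraph.deleteEdges_adj, hva, hav, hxv]
    exact h1.reachable.trans h2.reachable
  · obtain rfl : f = s(x, b) := (Sym2.mem_and_mem_iff hxb).1 ⟨hxf, hbf⟩
    refine absurd (matched_of_adj hG hM (h M hM) hfM ?_ hvx) (by simpa using hunm)
    rw [SimpleGraph.isBridge_iff]
    refine fun hb => hb ?_
    have h1 : (G.deleteEdges {s(x, b)}).Adj x v := by
      simp [SimpleGraph.deleteEdges_adj, hvx.symm, hbv.symm, hxv, hxb]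
    have h2 : (G.deleteEdges {s(x, b)}).Adj v a := by
      simp [SimpleGraph.deleteEdges_adj, hva, hbv.symm, hxv, hxa.symm]
    have h3 : (G.deleteEdges {s(x, b)}).Adj a b := by
      simp [SimpleGraph.deleteEdges_adj, hab, hab', hxa.symm, hxb.symm]
    exact (h1.reachable.trans h2.reachable).trans h3.reachable
end
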